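/- Fix a ∈ ℝ and define c_k := (1/2)·binomial(2k, k)·a^k for every integer k ≥ 0 (so c_0 = 1/2 and c_1 = a). Then for every integer l ≥ 1: c_{l+1} = 3·c_1·c_l + Σ_{j=1}^{l−1} c_{l−j}·( 4·c_1·c_j − c_{j+1} ). -/

import Mathlib

theorem cbr_conv (a : ℝ) (c : ℕ → ℝ)
    (h : ∀ n : ℕ, ((n : ℝ) + 1) * c (n + 1) = 2 * (2 * n + 1) * a * c n) (n : ℕ) :
    ∑ j ∈ Finset.range (n + 2), c j * c (n + 1 - j)
      = 4 * a * ∑ j ∈ Finset.range (n + 1), c j * c (n - j) := by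
  have sym : ∀ m : ℕ, 2 * ∑ j ∈ Finset.range (m + 1), (j : ℝ) * (c j * c (m - j))
      = m * ∑ j ∈ Finset.range (m + 1), c j * c (m - j) := by
    intro m
    have h1 := Finset.sum_range_reflect (fun j : ℕ => (j : ℝ) * (c j * c (m - j))) (m + 1)
    rw [two_mul]
    nth_rewrite 1 [← h1]
    rw [← Finset.sum_add_distrib, Finset.mul_sum]
    apply Finset.sum_congr rfl
    intro j hj
    have hj' : j ≤ m := by
      have := Finset.mem_range.mp hj
      omega
    have e1 : m + 1 - 1 - j = m - j := by omega
    have e2 : m - (m - j) = j := by omega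
    simp only [e1, e2]
    rw [Nat.cast_sub hj']
    ring
  have s1 := sym (n + 1)
  have s0 := sym n
  rw [Finset.sum_range_succ' (fun j : ℕ => (j : ℝ) * (c j * c (n + 1 - j)))] at s1
  have key : ∑ j ∈ Finset.range (n + 1), ((j + 1 : ℕ) : ℝ) * (c (j + 1) * c (n + 1 - (j + 1)))
      = 4 * a * ∑ j ∈ Finset.range (n + 1), (j : ℝ) * (c j * c (n - j))
        + 2 * a * ∑ j ∈ Finset.range (n + 1), c j * c (n - j) := by
    rw [Finset.mul_sum, Finset.mul_sum, ← Finset.sum_add_distrib]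
    apply Finset.sum_congr rfl
    intro j _
    rw [Nat.add_sub_add_right]
    push_cast
    linear_combination c (n - j) * h j
  rw [key] at s1
  push_cast at s1
  have hn : (n : ℝ) + 1 ≠ 0 := by positivity
  apply mul_left_cancel₀ hn
  linear_combination -s1 + 4 * a * s0

/-- **Discrete recursion for the constant terms of the Lenard operators** (key computation in
Lemma 3.2 of the paper): the sequence `c_k = (1/2)·C(2k, k)·aᵏ` satisfies
`c_{l+1} = 3 c₁ c_l + ∑_{j=1}^{l-1} c_{l-j} (4 c₁ c_j - c_{j+1})` for every `l ≥ 1`. -/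
theorem central_binomial_recursion (a : ℝ) (c : ℕ → ℝ)
    (hc : ∀ k : ℕ, c k = (1 / 2) * (Nat.choose (2 * k) k : ℝ) * a ^ k) :
    ∀ l : ℕ, 1 ≤ l →
      c (l + 1) = 3 * c 1 * c l
        + ∑ j ∈ Finset.Icc 1 (l - 1), c (l - j) * (4 * c 1 * c j - c (j + 1)) := by
  intro l hl
  have h : ∀ n : ℕ, ((n : ℝ) + 1) * c (n + 1) = 2 * (2 * n + 1) * a * c n := by
    intro n
    have := Nat.succ_mul_centralBinom_succ n
    rw [Nat.centralBinom_eq_two_mul_choose, Nat.centralBinom_eq_two_mul_choose] at this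
    have h2 : ((n : ℝ) + 1) * (Nat.choose (2 * (n + 1)) (n + 1) : ℝ)
        = 2 * (2 * n + 1) * (Nat.choose (2 * n) n : ℝ) := by exact_mod_cast this
    rw [hc, hc, pow_succ]
    linear_combination (1 / 2) * a ^ n * a * h2
  have c0 : c 0 = 1 / 2 := by rw [hc]; simp
  have c1 : c 1 = a := by rw [hc]; norm_num
  obtain ⟨m, rfl⟩ : ∃ m, l = m + 1 := ⟨l - 1, by omega⟩
  have k := cbr_conv a c h (m + 1)
  rw [Finset.sum_range_succ, Finset.sum_range_succ', Finset.sum_range_succ'] at k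
  rw [Finset.sum_range_succ, Finset.sum_range_succ'] at k
  have e : Finset.Icc 1 (m + 1 - 1) = Finset.Ico 1 (m + 1) := by ext x; simp only [Finset.mem_Icc, Finset.mem_Ico]; omega
  rw [e, Finset.sum_Ico_eq_sum_range]
  simp only [Nat.add_sub_cancel]
  have e3 : ∑ j ∈ Finset.range m, c (m + 1 - (1 + j)) * (4 * c 1 * c (1 + j) - c (1 + j + 1))
      = 4 * a * ∑ j ∈ Finset.range m, c (j + 1) * c (m + 1 - (j + 1))
        - ∑ j ∈ Finset.range m, c (j + 1 + 1) * c (m + 1 + 1 - (j + 1 + 1)) := by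
    rw [Finset.mul_sum, ← Finset.sum_sub_distrib]
    apply Finset.sum_congr rfl
    intro j _
    rw [c1, add_comm 1 j, Nat.add_sub_add_right (m + 1) 1 (j + 1)]
    ring
  rw [e3]
  simp only [Nat.sub_zero, Nat.sub_self, zero_add, c0, c1, Nat.add_sub_cancel] at k ⊢
  linear_combination k
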